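/- arXiv:1012.0952 — 8 statements merged into one kernel-verified Lean document; each statement's English description precedes it below -/
import Mathlib

section
/- There exists N₀ ∈ ℕ such that for all n ≥ N₀, all real t ≥ (1 + 4·log log n / log n)·(2n / log n), and all even natural numbers d with 2 ≤ d ≤ n, it holds that C(n,d) · (C(d, d/2) · 2^{−d})^t ≤ 2^{−3t/4}. -/
lemma cb_sq (m : ℕ) : (m.centralBinom : ℝ) ^ 2 * (2 * m + 1) ≤ ((4 : ℝ) ^ m) ^ 2 := by
  induction m with
  | zero => simp
  | succ m ih =>
    have h : ((m : ℝ) + 1) * ((m + 1).centralBinom : ℝ) = 2 * (2 * m + 1) * (m.centralBinom : ℝ) := by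
      exact_mod_cast Nat.succ_mul_centralBinom_succ m
    have hm : (0 : ℝ) ≤ m := Nat.cast_nonneg m
    set a := (m.centralBinom : ℝ)
    set b := ((m + 1).centralBinom : ℝ)
    set q := (4 : ℝ) ^ m
    have h2 : ((m : ℝ) + 1) ^ 2 * b ^ 2 = 4 * (2 * m + 1) ^ 2 * a ^ 2 := by
      have := congrArg (fun x => x ^ 2) h
      simp only [mul_pow] at this
      linarith
    have hpos : (0 : ℝ) < ((m : ℝ) + 1) ^ 2 := by positivity
    push_cast
    rw [pow_succ]
    refine le_of_mul_le_mul_left ?_ hpos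
    calc ((m : ℝ) + 1) ^ 2 * (b ^ 2 * (2 * (m + 1) + 1))
        = 4 * ((2 * m + 1) * (2 * m + 3)) * (a ^ 2 * (2 * m + 1)) := by
          rw [← mul_assoc, h2]; ring
      _ ≤ 4 * ((2 * m + 1) * (2 * m + 3)) * q ^ 2 := by gcongr
      _ ≤ 4 * (4 * (m + 1) ^ 2) * q ^ 2 := by
          refine mul_le_mul_of_nonneg_right ?_ (sq_nonneg q)
          nlinarith
      _ = _ := by ring

lemma cb_half (m : ℕ) : ((m + 1).centralBinom : ℝ) * 2 ≤ (4 : ℝ) ^ (m + 1) := by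
  induction m with
  | zero => norm_num [Nat.centralBinom, Nat.choose]
  | succ m ih =>
    have h : ((m : ℝ) + 2) * ((m + 2).centralBinom : ℝ)
        = 2 * (2 * m + 3) * ((m + 1).centralBinom : ℝ) := by
      have := Nat.succ_mul_centralBinom_succ (m + 1)
      have h3 : (m + 2) * (m + 2).centralBinom = 2 * (2 * m + 3) * (m + 1).centralBinom := by
        rw [this]; ring
      exact_mod_cast h3
    have hpos : (0 : ℝ) < (m : ℝ) + 2 := by positivity
    have ha : (0 : ℝ) ≤ ((m + 1).centralBinom : ℝ) := Nat.cast_nonneg _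
    rw [pow_succ]
    refine le_of_mul_le_mul_left ?_ hpos
    calc ((m : ℝ) + 2) * (((m + 2).centralBinom : ℝ) * 2)
        = 2 * (2 * m + 3) * (((m + 1).centralBinom : ℝ) * 2) := by rw [← mul_assoc, h]; ring
      _ ≤ 2 * (2 * m + 3) * 4 ^ (m + 1) := by gcongr
      _ ≤ 2 * (2 * m + 4) * 4 ^ (m + 1) := by gcongr; norm_num
      _ = _ := by ring

lemma ev_large : ∀ᶠ n : ℕ in Filter.atTop,
    3 ≤ Real.logb 2 (Real.logb 2 n) ∧
      28 * Real.logb 2 (Real.logb 2 n) ≤ Real.logb 2 n ∧ 2 ≤ Real.logb 2 n := by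
  have hL : Filter.Tendsto (fun n : ℕ => Real.logb 2 (n : ℝ)) Filter.atTop Filter.atTop :=
    (Real.tendsto_logb_atTop (by norm_num)).comp tendsto_natCast_atTop_atTop
  have h1 : ∀ᶠ x : ℝ in Filter.atTop, 3 ≤ Real.logb 2 x :=
    (Real.tendsto_logb_atTop (by norm_num)).eventually_ge_atTop 3
  have h2 : ∀ᶠ x : ℝ in Filter.atTop, 28 * Real.logb 2 x ≤ x := by
    have hl : 0 < Real.log 2 := Real.log_pos (by norm_num)
    have := Real.isLittleO_log_id_atTop.bound (c := Real.log 2 / 28) (by positivity)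
    filter_upwards [this, Filter.eventually_ge_atTop 0] with x hx h0
    simp only [id, Real.norm_eq_abs, abs_of_nonneg h0] at hx
    have := (le_abs_self _).trans hx
    rw [Real.logb, ← mul_div_assoc, div_le_iff₀ hl]
    linarith
  exact hL.eventually (h1.and (h2.and (Filter.eventually_ge_atTop 2)))

/-- Proposition 1 of the paper: for sufficiently large `n`,
`t ≥ (1 + 4 log log n / log n) * (2n / log n)`, and even `d` with `2 ≤ d ≤ n`,
we have `C(n,d) * (C(d,d/2) * 2^(-d))^t ≤ 2^(-3t/4)`.  Here `log` is the
base-2 logarithm and all powers are real powers. -/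
theorem stmt_0 :
    ∃ N₀ : ℕ, ∀ n : ℕ, n ≥ N₀ →
      ∀ t : ℝ,
        t ≥ (1 + 4 * Real.logb 2 (Real.logb 2 n) / Real.logb 2 n) *
              (2 * n / Real.logb 2 n) →
        ∀ d : ℕ, 2 ≤ d → d ≤ n → Even d →
          (n.choose d : ℝ) * ((d.choose (d / 2) : ℝ) * (2 : ℝ) ^ (-(d : ℝ))) ^ t ≤
            (2 : ℝ) ^ (-(3 * t / 4)) := by
  obtain ⟨N, hN⟩ := Filter.eventually_atTop.1 ev_large
  refine ⟨N, fun n hn t ht d hd2 hdn hde => ?_⟩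
  obtain ⟨hl3, hlL, hL2⟩ := hN n hn
  set L := Real.logb 2 (n : ℝ) with hLdef
  set l := Real.logb 2 L with hldef
  have hL0 : 0 < L := by linarith
  have hn0 : (0 : ℝ) < n := by
    have : 0 < n := by omega
    exact_mod_cast this
  have hnL : (2 : ℝ) ^ L = n := Real.rpow_logb (by norm_num) (by norm_num) hn0
  have hLl : (2 : ℝ) ^ l = L := Real.rpow_logb (by norm_num) (by norm_num) hL0
  obtain ⟨m, rfl⟩ := hde
  have hm : (m + m) / 2 = m := by omega
  have hcb : (m + m).choose m = m.centralBinom := by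
    rw [Nat.centralBinom]; congr 1; omega
  rw [hm, hcb]
  set p : ℝ := (m.centralBinom : ℝ) * (2 : ℝ) ^ (-((m + m : ℕ) : ℝ)) with hp
  have hpeq : p = (m.centralBinom : ℝ) / 4 ^ m := by
    rw [hp, Real.rpow_neg (by norm_num), Real.rpow_natCast, div_eq_mul_inv]
    congr 2
    rw [pow_add, ← mul_pow]; norm_num
  have hp0 : 0 ≤ p := by rw [hpeq]; positivity
  have ht1 : 2 * n / L ≤ t := by
    refine le_trans ?_ ht
    have : 0 ≤ 4 * l / L := by positivity
    have h3 : 0 ≤ 2 * (n : ℝ) / L := by positivity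
    nlinarith
  have ht0 : 0 ≤ t := le_trans (by positivity) ht1
  have key : ∀ a b : ℝ, (n.choose (m + m) : ℝ) ≤ 2 ^ a → p ≤ 2 ^ b → a + b * t ≤ -(3 * t / 4) →
      (n.choose (m + m) : ℝ) * p ^ t ≤ (2 : ℝ) ^ (-(3 * t / 4)) := by
    intro a b ha hb hab
    calc (n.choose (m + m) : ℝ) * p ^ t ≤ 2 ^ a * ((2 : ℝ) ^ b) ^ t := by gcongr
      _ = 2 ^ (a + b * t) := by rw [← Real.rpow_mul (by norm_num), Real.rpow_add (by norm_num)]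
      _ ≤ _ := Real.rpow_le_rpow_of_exponent_le (by norm_num) hab
  have hd0 : (0 : ℝ) < ((m + m : ℕ) : ℝ) := by
    have : 0 < m + m := by omega
    exact_mod_cast this
  rcases le_total (((m + m : ℕ) : ℝ) * L ^ 3) n with hc | hc
  · refine key (L * ((m + m : ℕ) : ℝ)) (-1) ?_ ?_ ?_
    · rw [Real.rpow_mul (by norm_num), hnL, Real.rpow_natCast]
      exact_mod_cast Nat.choose_le_pow n (m + m)
    · obtain ⟨k, rfl⟩ : ∃ k, m = k + 1 := ⟨m - 1, by omega⟩
      rw [hpeq, Real.rpow_neg_one, div_le_iff₀ (by positivity)]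
      have := cb_half k
      linarith
    · set D := ((m + m : ℕ) : ℝ)
      have h1 : 2 * (L * D) ≤ n / L := by
        rw [le_div_iff₀ hL0]
        refine le_trans ?_ hc
        have : 0 ≤ D * L ^ 2 := by positivity
        nlinarith
      have h2 : 2 * (n : ℝ) / L = 2 * (n / L) := by ring
      rw [h2] at ht1
      linarith
  · refine key n (-((L - 3 * l) / 2)) ?_ ?_ ?_
    · rw [Real.rpow_natCast]
      exact_mod_cast Nat.choose_le_two_pow n (m + m)
    · refine (sq_le_sq₀ hp0 (by positivity)).1 ?_
      have e1 : ((2 : ℝ) ^ (-((L - 3 * l) / 2))) ^ 2 = L ^ 3 / n := by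
        rw [← Real.rpow_natCast, ← Real.rpow_mul (by norm_num)]
        have : -((L - 3 * l) / 2) * ((2 : ℕ) : ℝ) = l * ((3 : ℕ) : ℝ) - L := by
          push_cast; ring
        rw [this, Real.rpow_sub (by norm_num), Real.rpow_mul (by norm_num), hLl, hnL,
          Real.rpow_natCast]
      rw [e1, hpeq, div_pow, div_le_div_iff₀ (by positivity) hn0]
      have h1 := cb_sq m
      have h2 : ((m + m : ℕ) : ℝ) ≤ 2 * m + 1 := by push_cast; linarith
      calc (m.centralBinom : ℝ) ^ 2 * n
          ≤ (m.centralBinom : ℝ) ^ 2 * (((m + m : ℕ) : ℝ) * L ^ 3) := by gcongr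
        _ ≤ (m.centralBinom : ℝ) ^ 2 * ((2 * m + 1) * L ^ 3) := by gcongr
        _ = L ^ 3 * ((m.centralBinom : ℝ) ^ 2 * (2 * m + 1)) := by ring
        _ ≤ L ^ 3 * ((4 : ℝ) ^ m) ^ 2 := by gcongr
    · have hA : 0 ≤ (L - 3 * l) / 2 - 3 / 4 := by linarith
      have h1 : (n : ℝ) ≤ (1 + 4 * l / L) * (2 * n / L) * ((L - 3 * l) / 2 - 3 / 4) := by
        have : (1 + 4 * l / L) * (2 * n / L) * ((L - 3 * l) / 2 - 3 / 4)
          = n * ((L + 4 * l) * (L - 3 * l - 3 / 2)) / L ^ 2 := by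
          field_simp; ring
        rw [this, le_div_iff₀ (by positivity)]
        refine mul_le_mul_of_nonneg_left ?_ hn0.le
        nlinarith
      have h2 := mul_le_mul_of_nonneg_right ht hA
      linarith
end

section
/- There exists N₀ ∈ ℕ such that for all n ≥ N₀, all real t ≥ 2n / log n, and all natural numbers d with 2 ≤ d and d < n / (log n)³, it holds that (e·n/d)^d · (π·d/2)^{−t/2} ≤ 2^{−3t/4}. -/
/-- The small-`d` case in the proof of the binomial bound: for sufficiently
large `n`, `t ≥ 2n / log n` and `2 ≤ d < n / (log n)^3`, it holds that
`(e n / d)^d * (π d / 2)^(-t/2) ≤ 2^(-3t/4)`.  Here `log` is the base-2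
logarithm and all powers are real powers. -/
theorem stmt_1 :
    ∃ N₀ : ℕ, ∀ n : ℕ, n ≥ N₀ →
      ∀ t : ℝ, t ≥ 2 * n / Real.logb 2 n →
        ∀ d : ℕ, 2 ≤ d → (d : ℝ) < n / (Real.logb 2 n) ^ 3 →
          (Real.exp 1 * n / d) ^ (d : ℝ) * (Real.pi * d / 2) ^ (-(t / 2)) ≤
            (2 : ℝ) ^ (-(3 * t / 4)) := by
  refine ⟨2 ^ 40, fun n hn t ht d hd hdn => ?_⟩
  have hn' : (2 : ℝ) ^ (40 : ℕ) ≤ n := by exact_mod_cast hn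
  have hn0 : (0 : ℝ) < n := lt_of_lt_of_le (by positivity) hn'
  have hd2 : (2 : ℝ) ≤ d := by exact_mod_cast hd
  have hd0 : (0 : ℝ) < d := by linarith
  have hpi := Real.pi_gt_three
  have hlogn : Real.log n = Real.logb 2 n * Real.log 2 := by
    rw [Real.logb, div_mul_cancel₀ _ (by positivity)]
  have hL : (40 : ℝ) ≤ Real.logb 2 n := by
    rw [Real.le_logb_iff_rpow_le (by norm_num) hn0]
    exact_mod_cast hn'
  generalize Real.logb 2 n = L at *
  have hL0 : 0 < L := by linarith
  have hln2 : Real.log 2 ≤ 1 := by have := Real.log_two_lt_d9; linarith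
  have hlnL : Real.log n ≤ L := by rw [hlogn]; nlinarith
  have ht0 : 0 < t := lt_of_lt_of_le (by positivity) ht
  have hld : 0 ≤ Real.log d := Real.log_nonneg (by linarith)
  have hpos1 : 0 < Real.exp 1 * n / d := by positivity
  have hpos2 : 0 < Real.pi * d / 2 := by positivity
  rw [Real.rpow_def_of_pos hpos1, Real.rpow_def_of_pos hpos2,
    Real.rpow_def_of_pos (by norm_num : (0 : ℝ) < 2), ← Real.exp_add, Real.exp_le_exp]
  have h1 : Real.log (Real.exp 1 * n / d) ≤ 1 + L := by
    rw [Real.log_div (by positivity) (by positivity), Real.log_mul (by positivity) (by positivity),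
      Real.log_exp]
    linarith
  -- the constant
  have h2 : Real.log 2 * (3 / 2) + 1 / 18 ≤ Real.log (Real.pi * d / 2) := by
    have a : Real.log Real.pi ≤ Real.log (Real.pi * d / 2) :=
      Real.log_le_log Real.pi_pos (by nlinarith)
    have b : 1 - (9 / 8 : ℝ)⁻¹ ≤ Real.log (9 / 8) :=
      Real.one_sub_inv_le_log_of_pos (by norm_num)
    have c : Real.log (9 / 8) = 2 * Real.log 3 - 3 * Real.log 2 := by
      rw [Real.log_div (by norm_num) (by norm_num), show (9 : ℝ) = 3 ^ 2 by norm_num,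
        show (8 : ℝ) = 2 ^ 3 by norm_num, Real.log_pow, Real.log_pow]
      norm_num
    have e : Real.log 3 ≤ Real.log Real.pi := Real.log_le_log (by norm_num) hpi.le
    norm_num at b
    linarith
  have h3 : Real.log (Real.exp 1 * n / d) * d ≤ n / (18 * L) := by
    calc Real.log (Real.exp 1 * n / d) * d ≤ (1 + L) * d := by gcongr
      _ ≤ (1 + L) * (n / L ^ 3) := by gcongr
      _ = ((1 + L) * 18 / L ^ 2) * (n / (18 * L)) := by field_simp
      _ ≤ 1 * (n / (18 * L)) := by
        gcongr
        rw [div_le_one (by positivity)]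
        nlinarith
      _ = _ := one_mul _
  have h4 : n / (18 * L) ≤ t / 36 := by
    have : (n : ℝ) / (18 * L) = (2 * n / L) / 36 := by field_simp; norm_num
    rw [this]; linarith
  have h5 := mul_le_mul_of_nonneg_right h2 (by linarith : 0 ≤ t / 2)
  linarith
end

section
/- There exists N₀ ∈ ℕ such that for all n ≥ N₀, all real t ≥ (1 + 4·log log n / log n)·(2n / log n), and all natural numbers d with n / (log n)³ ≤ d ≤ n, it holds that 2^n · (π·d/2)^{−t/2} ≤ 2^{−3t/4}. -/
theorem ev_aux : ∀ᶠ L : ℝ in Filter.atTop,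
    3 ≤ Real.logb 2 L ∧ 18 * (Real.logb 2 L) ^ 2 ≤ L ∧ 1 ≤ L := by
  have h1 : Filter.Tendsto (Real.logb 2) Filter.atTop Filter.atTop :=
    Real.tendsto_logb_atTop (by norm_num)
  have hl : 0 < Real.log 2 := Real.log_pos (by norm_num)
  have h2 := (Real.isLittleO_pow_log_id_atTop (n := 2)).bound
    (show (0:ℝ) < (Real.log 2)^2 / 18 by positivity)
  filter_upwards [h1.eventually_ge_atTop 3, h2, Filter.eventually_ge_atTop 1] with L a b c
  refine ⟨a, ?_, c⟩
  simp only [id, Real.norm_eq_abs] at b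
  rw [abs_of_nonneg (by positivity), abs_of_nonneg (by linarith)] at b
  unfold Real.logb
  rw [div_pow, ← mul_div_assoc, div_le_iff₀ (by positivity)]
  linarith

/-- The large-`d` case in the proof of the binomial bound: for sufficiently
large `n`, `t ≥ (1 + 4 log log n / log n) * (2n / log n)` and
`n / (log n)^3 ≤ d ≤ n`, it holds that `2^n * (π d / 2)^(-t/2) ≤ 2^(-3t/4)`.
Here `log` is the base-2 logarithm and all powers are real powers. -/
theorem stmt_2 :
    ∃ N₀ : ℕ, ∀ n : ℕ, n ≥ N₀ →
      ∀ t : ℝ,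
        t ≥ (1 + 4 * Real.logb 2 (Real.logb 2 n) / Real.logb 2 n) *
              (2 * n / Real.logb 2 n) →
        ∀ d : ℕ, (n : ℝ) / (Real.logb 2 n) ^ 3 ≤ d → d ≤ n →
          (2 : ℝ) ^ (n : ℝ) * (Real.pi * d / 2) ^ (-(t / 2)) ≤
            (2 : ℝ) ^ (-(3 * t / 4)) := by
  have h1 : Filter.Tendsto (fun n : ℕ => Real.logb 2 (n:ℝ)) Filter.atTop Filter.atTop :=
    (Real.tendsto_logb_atTop (by norm_num)).comp tendsto_natCast_atTop_atTop
  obtain ⟨N, hN⟩ := Filter.eventually_atTop.1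
    ((h1.eventually ev_aux).and (Filter.eventually_ge_atTop 1))
  refine ⟨N, fun n hn t ht d hd _ => ?_⟩
  obtain ⟨⟨hM, hL, hL1⟩, hn1⟩ := hN n hn
  have hn0 : (0:ℝ) < n := by exact_mod_cast hn1
  generalize hLd : Real.logb 2 (n:ℝ) = L at *
  generalize hMd : Real.logb 2 L = M at *
  have hL0 : 0 < L := by linarith
  have hd0 : (0:ℝ) < d := lt_of_lt_of_le (by positivity) hd
  have hpd : (d:ℝ) ≤ Real.pi * d / 2 := by nlinarith [Real.pi_gt_three]
  have hp0 : 0 < Real.pi * d / 2 := by linarith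
  have hlog : L - 3 * M ≤ Real.logb 2 (Real.pi * d / 2) := by
    have := Real.logb_le_logb_of_le (b := 2) (by norm_num) (by positivity) (hd.trans hpd)
    rw [Real.logb_div hn0.ne' (by positivity), Real.logb_pow, hLd, hMd] at this
    simpa using this
  have e : (Real.pi * d / 2) = (2:ℝ) ^ (Real.logb 2 (Real.pi * d / 2)) :=
    (Real.rpow_logb (by norm_num) (by norm_num) hp0).symm
  generalize Real.logb 2 (Real.pi * d / 2) = K at *
  rw [e, ← Real.rpow_mul (by norm_num), ← Real.rpow_add (by norm_num)]
  apply Real.rpow_le_rpow_of_exponent_le (by norm_num)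
  have hP : 0 ≤ L - 3 * M - 3/2 := by nlinarith
  have ht0 : 0 ≤ t := le_trans (by positivity) ht
  have key : (n:ℝ) ≤ (1 + 4 * M / L) * (n / L) * (L - 3 * M - 3/2) := by
    have : (1 + 4 * M / L) * (n / L) * (L - 3 * M - 3/2)
        = n * ((L + 4 * M) * (L - 3 * M - 3/2)) / L^2 := by field_simp
    rw [this, le_div_iff₀ (by positivity)]
    apply mul_le_mul_of_nonneg_left _ hn0.le
    have : 0 ≤ (M - 3) * L := mul_nonneg (by linarith) hL0.le
    nlinarith
  have h2 : (1 + 4 * M / L) * (n / L) ≤ t / 2 := by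
    have : (1 + 4 * M / L) * (2 * n / L) = 2 * ((1 + 4 * M / L) * (n / L)) := by ring
    linarith
  have h3 := mul_le_mul_of_nonneg_right h2 hP
  have h4 := mul_le_mul_of_nonneg_left hlog (show 0 ≤ t / 2 by linarith)
  linarith
end

section
/- Let n ∈ ℕ and let y, z : Fin n → Bool be bitstrings with Hamming distance H(y,z) = d, where d is even. Then the number of bitstrings x : Fin n → Bool with H(x,y) = H(x,z) equals C(d, d/2) · 2^{n−d}. -/
/-- For bitstrings `y, z` at even Hamming distance `d`, the number of
bitstrings `x` with `H(x,y) = H(x,z)` equals `C(d, d/2) * 2^(n-d)`. -/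
theorem stmt_5 (n : ℕ) (y z : Fin n → Bool) (d : ℕ) (hd : hammingDist y z = d)
    (hdeven : Even d) :
    (Finset.univ.filter fun x : Fin n → Bool =>
        hammingDist x y = hammingDist x z).card =
      d.choose (d / 2) * 2 ^ (n - d) := by
  classical
  set D : Finset (Fin n) := Finset.univ.filter (fun i => y i ≠ z i) with hD
  have hDc : D.card = d := hd
  have key : ∀ x : Fin n → Bool, hammingDist x y = hammingDist x z ↔
      (D.filter (fun i => x i ≠ y i)).card = d / 2 := by
    intro x
    have h1 : hammingDist x y = (D.filter (fun i => x i ≠ y i)).card +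
        (Dᶜ.filter (fun i => x i ≠ y i)).card := by
      unfold hammingDist
      rw [← Finset.card_union_of_disjoint]
      · congr 1
        ext i
        simp [hD]
        tauto
      · rw [Finset.disjoint_left]
        intro i
        simp
        tauto
    have h2 : hammingDist x z = (D.filter (fun i => ¬ (x i ≠ y i))).card +
        (Dᶜ.filter (fun i => x i ≠ y i)).card := by
      unfold hammingDist
      rw [← Finset.card_union_of_disjoint]
      · congr 1
        ext i
        simp [hD]
        cases x i <;> cases y i <;> cases z i <;> simp
      · rw [Finset.disjoint_left]
        intro i
        simp
        tauto
    have h3 := Finset.card_filter_add_card_filter_not (s := D) (fun i => x i ≠ y i)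
    obtain ⟨k, hk⟩ := hdeven
    omega
  have hcard : (Finset.powersetCard (d / 2) D ×ˢ Dᶜ.powerset).card =
      d.choose (d / 2) * 2 ^ (n - d) := by
    rw [Finset.card_product, Finset.card_powersetCard, Finset.card_powerset,
      Finset.card_compl, hDc, Fintype.card_fin]
  rw [← hcard]
  refine Finset.card_nbij'
    (fun x => (D.filter (fun i => x i ≠ y i), Dᶜ.filter (fun i => x i ≠ y i)))
    (fun p i => xor (y i) (decide (i ∈ p.1 ∪ p.2))) ?_ ?_ ?_ ?_
  · intro x hx
    have hx' := (key x).1 (by simpa using hx)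
    simp only [Finset.coe_product, Set.mem_prod, Finset.mem_coe, Finset.mem_powersetCard,
      Finset.mem_powerset]
    exact ⟨⟨Finset.filter_subset _ _, hx'⟩, Finset.filter_subset _ _⟩
  · rintro ⟨S, T⟩ hp
    simp only [Finset.coe_product, Set.mem_prod, Finset.mem_coe, Finset.mem_powersetCard,
      Finset.mem_powerset] at hp
    obtain ⟨⟨hS, hc⟩, hT⟩ := hp
    simp only [Finset.mem_coe, Finset.mem_filter, Finset.mem_univ, true_and]
    rw [key, ← hc]
    congr 1
    ext i
    have a := @hS i
    have b := @hT i
    rw [Finset.mem_compl] at b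
    rw [Finset.mem_filter]
    cases y i <;> simp <;> tauto
  · intro x hx
    funext i
    by_cases h : i ∈ D <;> cases hx : x i <;> cases hy : y i <;> simp [h, hx, hy]
  · rintro ⟨S, T⟩ hp
    simp only [Finset.mem_product, Finset.mem_coe, Finset.mem_powersetCard,
      Finset.mem_powerset] at hp
    obtain ⟨⟨hS, hc⟩, hT⟩ := hp
    refine Prod.ext ?_ ?_
    all_goals
      ext i
      have a := @hS i
      have b := @hT i
      rw [Finset.mem_compl] at b
      simp only [Finset.mem_filter, Finset.mem_compl]
      cases y i <;> simp <;> tauto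
end

section
/- There exists N₀ ∈ ℕ such that for all n ≥ N₀, all natural numbers t ≥ (1 + 4·log log n / log n)·(2n / log n), and every bitstring z : Fin n → Bool, the number of t-tuples (x¹,…,xᵗ) of bitstrings of length n for which there exists a bitstring y ≠ z with H(xⁱ,y) = H(xⁱ,z) for all i ∈ {1,…,t} is at most 2^{nt} · 2^{−t/2}. Equivalently, if x¹,…,xᵗ are chosen independently and uniformly at random from {0,1}^n, the probability that some y ≠ z satisfies H(xⁱ,y) = H(xⁱ,z) for all i is at most 2^{−t/2}. -/
open Finset in
lemma aux_count {n : ℕ} (y z : Fin n → Bool) (k : ℕ) (hk : hammingDist y z = 2 * k) :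
    (univ.filter fun x : Fin n → Bool => hammingDist x y = hammingDist x z).card
      ≤ k.centralBinom * 2 ^ (n - 2 * k) := by
  classical
  set D : Finset (Fin n) := univ.filter fun i => y i ≠ z i with hD
  have hDc : D.card = 2 * k := hk
  have h1 : (powersetCard k D ×ˢ powerset Dᶜ).card = k.centralBinom * 2 ^ (n - 2 * k) := by
    rw [card_product, card_powersetCard, card_powerset, card_compl, hDc, Fintype.card_fin]
    rfl
  rw [← h1]
  apply Finset.card_le_card_of_injOn
    (fun x => (D.filter (fun i => x i ≠ z i), Dᶜ.filter (fun i => x i ≠ z i)))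
  · intro x hx
    simp only [coe_filter, mem_univ, true_and, Set.mem_ofPred_eq, hammingDist] at hx
    simp only [mem_coe, mem_product, mem_powersetCard, mem_powerset, filter_subset, true_and, and_true]
    have e1 : ∀ p : Fin n → Prop, ∀ [DecidablePred p], (univ.filter p).card
        = (D.filter p).card + (Dᶜ.filter p).card := by
      intro p _
      rw [← card_union_of_disjoint, ← filter_union, union_compl]
      exact disjoint_filter_filter disjoint_compl_right
    rw [e1, e1 (fun i => x i ≠ z i)] at hx
    have e2 : Dᶜ.filter (fun i => x i ≠ y i) = Dᶜ.filter (fun i => x i ≠ z i) := by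
      apply filter_congr
      intro i hi
      simp [hD] at hi
      rw [hi]
    have e3 : D.filter (fun i => x i ≠ y i) = D.filter (fun i => ¬ x i ≠ z i) := by
      apply filter_congr
      intro i hi
      simp [hD] at hi
      revert hi
      cases x i <;> cases y i <;> cases z i <;> simp
    have e4 := card_filter_add_card_filter_not (s := D) (fun i => x i ≠ z i)
    rw [e2, e3] at hx
    omega
  · intro x _ x' _ h
    simp only [Prod.mk.injEq] at h
    funext i
    have key : x i ≠ z i ↔ x' i ≠ z i := by
      by_cases hi : i ∈ D
      · have := congrArg (fun s => i ∈ s) h.1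
        simpa [hi] using this
      · have := congrArg (fun s => i ∈ s) h.2
        simpa [hi] using this
    revert key
    cases x i <;> cases x' i <;> cases z i <;> simp

open Finset in
lemma aux_odd {n : ℕ} (x y z : Fin n → Bool) (h : hammingDist x y = hammingDist x z) :
    ∃ k, hammingDist y z = 2 * k := by
  classical
  set D : Finset (Fin n) := univ.filter fun i => y i ≠ z i with hD
  refine ⟨(D.filter (fun i => x i ≠ z i)).card, ?_⟩
  change D.card = _
  have hx := h
  simp only [hammingDist] at hx
  have e1 : ∀ p : Fin n → Prop, ∀ [DecidablePred p], (univ.filter p).card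
      = (D.filter p).card + (Dᶜ.filter p).card := by
    intro p _
    rw [← card_union_of_disjoint, ← filter_union, union_compl]
    exact disjoint_filter_filter disjoint_compl_right
  rw [e1, e1 (fun i => x i ≠ z i)] at hx
  have e2 : Dᶜ.filter (fun i => x i ≠ y i) = Dᶜ.filter (fun i => x i ≠ z i) := by
    apply filter_congr
    intro i hi
    simp [hD] at hi
    rw [hi]
  have e3 : D.filter (fun i => x i ≠ y i) = D.filter (fun i => ¬ x i ≠ z i) := by
    apply filter_congr
    intro i hi
    simp [hD] at hi
    revert hi
    cases x i <;> cases y i <;> cases z i <;> simp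
  have e4 := card_filter_add_card_filter_not (s := D) (fun i => x i ≠ z i)
  rw [e2, e3] at hx
  omega

lemma aux_cb (k : ℕ) : (k.centralBinom : ℝ) ^ 2 * (2 * k + 1) ≤ (4 ^ k) ^ 2 := by
  induction k with
  | zero => simp
  | succ k ih =>
    have h : ((k : ℝ) + 1) * (k + 1).centralBinom = 2 * (2 * k + 1) * k.centralBinom := by
      exact_mod_cast Nat.succ_mul_centralBinom_succ k
    have hk : (0 : ℝ) < (k : ℝ) + 1 := by positivity
    have h2 : ((k + 1).centralBinom : ℝ) = 2 * (2 * k + 1) * k.centralBinom / (k + 1) := by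
      field_simp; linarith
    rw [h2, div_pow, div_mul_eq_mul_div, div_le_iff₀ (by positivity)]
    push_cast
    have h3 : (2 * (2 * (k : ℝ) + 1) * k.centralBinom) ^ 2 * (2 * (k + 1) + 1)
        = ((k.centralBinom : ℝ) ^ 2 * (2 * k + 1)) * (4 * (2 * k + 1) * (2 * k + 3)) := by ring
    rw [h3]
    calc _ ≤ ((4 : ℝ) ^ k) ^ 2 * (4 * (2 * k + 1) * (2 * k + 3)) := by gcongr
      _ ≤ ((4 : ℝ) ^ k) ^ 2 * (16 * (k + 1) ^ 2) := by
        refine mul_le_mul_of_nonneg_left ?_ (by positivity); nlinarith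
      _ = _ := by ring

lemma aux_half (k : ℕ) : 2 * (k + 1).centralBinom ≤ 4 ^ (k + 1) := by
  induction k with
  | zero => simp [Nat.centralBinom]
  | succ k ih =>
    have h := Nat.succ_mul_centralBinom_succ (k + 1)
    have : (k + 2) * (2 * (k + 2).centralBinom) ≤ (k + 2) * 4 ^ (k + 2) := by
      calc (k + 2) * (2 * (k + 2).centralBinom) = 2 * ((k + 1 + 1) * (k + 1 + 1).centralBinom) := by ring
        _ = 2 * (2 * (k + 1) + 1) * (2 * (k + 1).centralBinom) := by rw [h]; ring
        _ ≤ 2 * (2 * (k + 1) + 1) * 4 ^ (k + 1) := by gcongr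
        _ ≤ (4 * (k + 2)) * 4 ^ (k + 1) := Nat.mul_le_mul_right _ (by omega)
        _ = _ := by ring
    exact Nat.le_of_mul_le_mul_left this (by omega)

open Finset in
lemma aux_q {n : ℕ} (y z : Fin n → Bool) (hy : y ≠ z) :
    ((univ.filter fun x : Fin n → Bool => hammingDist x y = hammingDist x z).card : ℝ) / 2 ^ n ≤ 1 / 2
    ∧ (((univ.filter fun x : Fin n → Bool => hammingDist x y = hammingDist x z).card : ℝ) / 2 ^ n) ^ 2
        * (hammingDist y z : ℝ) ≤ 1 := by
  rcases (univ.filter fun x : Fin n → Bool => hammingDist x y = hammingDist x z).eq_empty_or_nonempty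
    with h | ⟨x, hx⟩
  · rw [h]; simp
  · obtain ⟨k, hk⟩ := aux_odd x y z (by simpa using hx)
    have hc := aux_count y z k hk
    set A := (univ.filter fun x : Fin n → Bool => hammingDist x y = hammingDist x z).card
    have hkn : 2 * k ≤ n := by
      rw [← hk]; simpa using hammingDist_le_card_fintype (x := y) (y := z)
    have hq : (A : ℝ) / 2 ^ n ≤ k.centralBinom / 4 ^ k := by
      rw [div_le_div_iff₀ (by positivity) (by positivity)]
      have : A * 4 ^ k ≤ k.centralBinom * 2 ^ n := by
        calc A * 4 ^ k ≤ k.centralBinom * 2 ^ (n - 2 * k) * 4 ^ k := by gcongr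
          _ = k.centralBinom * 2 ^ n := by
            rw [show 4 = 2 ^ 2 by norm_num, ← pow_mul, mul_assoc, ← pow_add]
            congr 2; omega
      exact_mod_cast this
    have hpos : 0 < hammingDist y z := hammingDist_pos.mpr hy
    constructor
    · refine hq.trans ?_
      rw [div_le_div_iff₀ (by positivity) (by positivity)]
      obtain ⟨j, rfl⟩ : ∃ j, k = j + 1 := ⟨k - 1, by omega⟩
      have := aux_half j
      have h : (2 : ℝ) * (j + 1).centralBinom ≤ 4 ^ (j + 1) := by exact_mod_cast this
      linarith
    · rw [hk]
      calc _ ≤ ((k.centralBinom : ℝ) / 4 ^ k) ^ 2 * (2 * k + 1) := by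
            push_cast; gcongr; linarith
        _ ≤ 1 := by
            rw [div_pow, div_mul_eq_mul_div, div_le_one (by positivity)]
            exact aux_cb k

open Finset in
lemma aux_small {n : ℕ} (hn : 1 ≤ n) (z : Fin n → Bool) (m : ℕ) (hm : m ≤ n) :
    (univ.filter fun y : Fin n → Bool => hammingDist y z ≤ m).card ≤ (n + 1) * n ^ m := by
  classical
  have h1 : (univ.filter fun y : Fin n → Bool => hammingDist y z ≤ m).card
      ≤ ((range (m + 1)).biUnion fun j => powersetCard j (univ : Finset (Fin n))).card := by
    apply Finset.card_le_card_of_injOn (fun y => univ.filter fun i => y i ≠ z i)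
    · intro y hy
      simp only [coe_filter, mem_univ, true_and, Set.mem_ofPred_eq, hammingDist] at hy
      simp only [mem_coe, mem_biUnion, mem_range, mem_powersetCard]
      exact ⟨_, by omega, subset_univ _, rfl⟩
    · intro x _ x' _ h
      funext i
      have := congrArg (fun s => i ∈ s) h
      simp only [mem_filter, mem_univ, true_and] at this
      have key := this.to_iff
      revert key
      cases x i <;> cases x' i <;> cases z i <;> simp
  refine h1.trans (card_biUnion_le.trans ?_)
  calc _ ≤ ∑ j ∈ range (m + 1), n ^ m := by
        apply sum_le_sum
        intro j hj
        rw [card_powersetCard, card_univ, Fintype.card_fin]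
        refine (Nat.choose_le_pow n j).trans (Nat.pow_le_pow_right hn ?_)
        simp at hj; omega
    _ = (m + 1) * n ^ m := by simp
    _ ≤ _ := by gcongr

open Finset in
lemma aux_union {n t : ℕ} (z : Fin n → Bool) :
    ((univ.filter fun x : Fin t → (Fin n → Bool) => ∃ y : Fin n → Bool, y ≠ z ∧
        ∀ i : Fin t, hammingDist (x i) y = hammingDist (x i) z).card : ℝ)
    ≤ (2 : ℝ) ^ (n * t) * ∑ y ∈ univ.filter (fun y => y ≠ z),
      (((univ.filter fun x : Fin n → Bool => hammingDist x y = hammingDist x z).card : ℝ) / 2 ^ n) ^ t := by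
  classical
  have h : (univ.filter fun x : Fin t → (Fin n → Bool) => ∃ y : Fin n → Bool, y ≠ z ∧
        ∀ i : Fin t, hammingDist (x i) y = hammingDist (x i) z).card
      ≤ ∑ y ∈ univ.filter (fun y => y ≠ z),
       (univ.filter fun x : Fin n → Bool => hammingDist x y = hammingDist x z).card ^ t := by
    calc _ ≤ ((univ.filter (fun y => y ≠ z)).biUnion fun y => Fintype.piFinset fun _ : Fin t =>
        (univ.filter fun x : Fin n → Bool => hammingDist x y = hammingDist x z)).card := by
          apply card_le_card
          intro x hx
          simpa using hx
      _ ≤ _ := by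
        refine card_biUnion_le.trans (le_of_eq ?_)
        simp [Fintype.card_piFinset]
  rw [mul_sum]
  calc _ ≤ ((∑ y ∈ univ.filter (fun y => y ≠ z),
       (univ.filter fun x : Fin n → Bool => hammingDist x y = hammingDist x z).card ^ t : ℕ) : ℝ) := by
        exact_mod_cast h
    _ = _ := by
      push_cast
      apply sum_congr rfl
      intro y _
      rw [div_pow, ← pow_mul]
      field_simp

open Filter in
lemma aux_ev : ∃ N₀ : ℕ, ∀ n : ℕ, n ≥ N₀ → 1 ≤ n ∧ 4 ≤ Real.logb 2 n ∧
    1 ≤ Real.logb 2 (Real.logb 2 n) ∧ 24 * Real.logb 2 (Real.logb 2 n) ≤ Real.logb 2 n ∧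
    2 * Real.logb 2 n * (Real.logb 2 n + 2) ≤ n := by
  have hl2 : (0 : ℝ) < Real.log 2 := Real.log_pos (by norm_num)
  have hL : Tendsto (fun n : ℕ => Real.logb 2 (n : ℝ)) atTop atTop :=
    (Real.tendsto_logb_atTop (by norm_num)).comp tendsto_natCast_atTop_atTop
  have hll := (Real.tendsto_logb_atTop (b := 2) (by norm_num)).comp hL
  have h3 : ∀ᶠ x : ℝ in atTop, 24 * Real.logb 2 x ≤ x := by
    have := Real.isLittleO_log_id_atTop.bound (c := Real.log 2 / 24) (by positivity)
    filter_upwards [this, eventually_ge_atTop 0] with x hx h0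
    simp only [id, Real.norm_eq_abs, abs_of_nonneg h0] at hx
    have := (le_abs_self _).trans hx
    rw [Real.logb, ← mul_div_assoc, div_le_iff₀ hl2]
    linarith
  have h4 : ∀ᶠ x : ℝ in atTop, 4 * (Real.logb 2 x) ^ 2 ≤ x := by
    have := (Real.isLittleO_pow_log_id_atTop (n := 2)).bound (c := (Real.log 2) ^ 2 / 4) (by positivity)
    filter_upwards [this, eventually_ge_atTop 0] with x hx h0
    simp only [id, Real.norm_eq_abs, abs_of_nonneg h0] at hx
    have := (le_abs_self _).trans hx
    rw [Real.logb, div_pow, ← mul_div_assoc, div_le_iff₀ (by positivity)]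
    linarith
  have : ∀ᶠ n : ℕ in atTop, 1 ≤ n ∧ 4 ≤ Real.logb 2 n ∧
    1 ≤ Real.logb 2 (Real.logb 2 n) ∧ 24 * Real.logb 2 (Real.logb 2 n) ≤ Real.logb 2 n ∧
    2 * Real.logb 2 n * (Real.logb 2 n + 2) ≤ n := by
    filter_upwards [eventually_ge_atTop 1, hL.eventually_ge_atTop 4, hll.eventually_ge_atTop 1,
      hL.eventually h3, tendsto_natCast_atTop_atTop.eventually h4] with n a b c d e
    refine ⟨a, b, c, d, ?_⟩
    nlinarith
  exact eventually_atTop.mp this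

/-- Theorem 5 of the paper (counting version): for sufficiently large `n`,
`t ≥ (1 + 4 log log n / log n)(2n / log n)` and any target `z`, the number of
`t`-tuples of bitstrings for which some `y ≠ z` satisfies
`H(xⁱ,y) = H(xⁱ,z)` for all `i` is at most `2^{nt} · 2^{-t/2}`; i.e. the
probability (under `t` independent uniform samples) that some wrong OneMax
target is consistent with all samples is at most `2^{-t/2}`. -/
theorem stmt_9 :
    ∃ N₀ : ℕ, ∀ n : ℕ, n ≥ N₀ →
      ∀ t : ℕ,
        (t : ℝ) ≥ (1 + 4 * Real.logb 2 (Real.logb 2 n) / Real.logb 2 n) *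
              (2 * n / Real.logb 2 n) →
        ∀ z : Fin n → Bool,
          ((Finset.univ.filter fun x : Fin t → (Fin n → Bool) =>
              ∃ y : Fin n → Bool, y ≠ z ∧
                ∀ i : Fin t, hammingDist (x i) y = hammingDist (x i) z).card : ℝ) ≤
            (2 : ℝ) ^ (n * t) * (2 : ℝ) ^ (-((t : ℝ) / 2)) := by
  obtain ⟨N₀, hN⟩ := aux_ev
  refine ⟨N₀, fun n hn t ht z => ?_⟩
  obtain ⟨h1, hL4, hl1, h24, hnL⟩ := hN n hn
  set L := Real.logb 2 (n : ℝ) with hLdef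
  set l := Real.logb 2 L with hldef
  have hn0 : (0 : ℝ) < n := by exact_mod_cast h1
  have hL0 : 0 < L := by linarith
  have hnL2 : (n : ℝ) = 2 ^ L := (Real.rpow_logb (by norm_num) (by norm_num) hn0).symm
  have hLl : L = 2 ^ l := (Real.rpow_logb (by norm_num) (by norm_num) hL0).symm
  have ht2 : (1 + 4 * l / L) * (n / L) ≤ (t : ℝ) / 2 := by
    have : (1 + 4 * l / L) * (2 * n / L) = 2 * ((1 + 4 * l / L) * (n / L)) := by ring
    linarith
  have ht1 : (n : ℝ) / L ≤ (t : ℝ) / 2 := by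
    refine le_trans ?_ ht2
    have : 0 ≤ 4 * l / L := by positivity
    have h' : 0 ≤ (n : ℝ) / L := by positivity
    nlinarith
  set κ : ℝ := (2 : ℝ) ^ (L - 3 * l) with hκ
  have hκ0 : 0 < κ := by positivity
  have hκL : κ = n / L ^ 3 := by
    rw [hκ, Real.rpow_sub (by norm_num), ← hnL2]
    congr 1
    conv_rhs => rw [hLl]
    rw [← Real.rpow_natCast, ← Real.rpow_mul (by norm_num)]
    congr 1; push_cast; ring
  clear_value κ
  refine (aux_union z).trans ?_
  refine mul_le_mul_of_nonneg_left ?_ (by positivity)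
  classical
  set q : (Fin n → Bool) → ℝ := fun y =>
    ((Finset.univ.filter fun x : Fin n → Bool => hammingDist x y = hammingDist x z).card : ℝ) / 2 ^ n
    with hq
  change ∑ y ∈ _, q y ^ t ≤ _
  have hq0 : ∀ y, 0 ≤ q y := fun y => div_nonneg (Nat.cast_nonneg _) (by positivity)
  -- pointwise bound
  set S := Finset.univ.filter (fun y : Fin n → Bool => hammingDist y z ≤ ⌊2 * κ⌋₊) with hS
  set P : ℝ := (2 : ℝ) ^ (-((t : ℝ) / 2)) with hP
  have hP0 : 0 < P := by positivity
  have hPP : ((1 : ℝ) / 2) ^ t = P * P := by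
    rw [hP, ← Real.rpow_add (by norm_num), one_div, inv_pow, ← Real.rpow_natCast,
      ← Real.rpow_neg (by norm_num)]
    congr 1; ring
  have hpt : ∀ y ∈ Finset.univ.filter (fun y => y ≠ z),
      q y ^ t ≤ (if y ∈ S then P * P else 0) + (2 * κ) ^ (-((t : ℝ) / 2)) := by
    intro y hy
    have hyz : y ≠ z := by simpa using hy
    obtain ⟨ha, hb⟩ := aux_q y z hyz
    change q y ≤ _ at ha
    change q y ^ 2 * _ ≤ _ at hb
    have hR : 0 ≤ (2 * κ) ^ (-((t : ℝ) / 2)) := by positivity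
    split_ifs with h
    · have : q y ^ t ≤ (1 / 2) ^ t := pow_le_pow_left₀ (hq0 y) ha t
      linarith
    · have hd : 2 * κ < hammingDist y z := by
        simp only [hS, Finset.mem_filter, Finset.mem_univ, true_and, not_le] at h
        exact Nat.lt_of_floor_lt h
      have hle : q y ^ 2 ≤ (2 * κ)⁻¹ := by
        rw [← one_div, le_div_iff₀ (by positivity)]
        exact le_trans (mul_le_mul_of_nonneg_left hd.le (sq_nonneg _)) hb
      rw [zero_add, Real.rpow_neg (by positivity), ← Real.inv_rpow (by positivity)]
      calc q y ^ t = (q y ^ 2) ^ ((t : ℝ) / 2) := by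
            rw [← Real.rpow_natCast (q y) 2, ← Real.rpow_mul (hq0 y), ← Real.rpow_natCast]
            congr 1; push_cast; ring
        _ ≤ _ := Real.rpow_le_rpow (sq_nonneg _) hle (by positivity)
  have hA : ∑ y ∈ Finset.univ.filter (fun y => y ≠ z), q y ^ t
      ≤ S.card * (P * P) + 2 ^ n * (2 * κ) ^ (-((t : ℝ) / 2)) := by
    calc _ ≤ ∑ y ∈ Finset.univ.filter (fun y => y ≠ z),
          ((if y ∈ S then P * P else 0) + (2 * κ) ^ (-((t : ℝ) / 2))) := Finset.sum_le_sum hpt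
      _ ≤ ∑ y : Fin n → Bool, ((if y ∈ S then P * P else 0) + (2 * κ) ^ (-((t : ℝ) / 2))) := by
          apply Finset.sum_le_sum_of_subset_of_nonneg (Finset.subset_univ _)
          intro y _ _
          positivity
      _ = _ := by
          rw [Finset.sum_add_distrib]
          simp
  refine hA.trans ?_
  have hB : (S.card : ℝ) * P ≤ 1 / 2 := by
    have h64 : (64 : ℝ) ≤ L ^ 3 := by
      calc (64 : ℝ) = 4 ^ 3 := by norm_num
        _ ≤ _ := by gcongr
    have hm : ⌊2 * κ⌋₊ ≤ n := by
      have : 2 * κ ≤ n := by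
        rw [hκL, ← mul_div_assoc, div_le_iff₀ (by positivity)]
        nlinarith
      exact Nat.floor_le_of_le this
    have hc := aux_small h1 z _ hm
    have hc' : (S.card : ℝ) ≤ (n + 1) * (n : ℝ) ^ ⌊2 * κ⌋₊ := by exact_mod_cast hc
    have hc2 : (n : ℝ) ^ ⌊2 * κ⌋₊ ≤ 2 ^ (2 * n / L ^ 2) := by
      rw [← Real.rpow_natCast]
      calc (n : ℝ) ^ ((⌊2 * κ⌋₊ : ℕ) : ℝ) ≤ (n : ℝ) ^ (2 * κ) := by
            apply Real.rpow_le_rpow_of_exponent_le (by exact_mod_cast h1)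
            exact Nat.floor_le (by positivity)
        _ = _ := by
            conv_lhs => rw [hnL2]
            rw [← Real.rpow_mul (by norm_num), hκL]
            congr 1
            field_simp
    have hc3 : (n : ℝ) + 1 ≤ 2 ^ (L + 1) := by
      rw [Real.rpow_add (by norm_num), ← hnL2, Real.rpow_one]
      have : (1 : ℝ) ≤ n := by exact_mod_cast h1
      linarith
    calc (S.card : ℝ) * P ≤ (2 ^ (L + 1) * 2 ^ (2 * n / L ^ 2)) * P := by
          gcongr
          exact hc'.trans (by gcongr)
      _ = (2 : ℝ) ^ (L + 1 + 2 * n / L ^ 2 + -((t : ℝ) / 2)) := by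
          rw [hP, ← Real.rpow_add (by norm_num), ← Real.rpow_add (by norm_num)]
      _ ≤ (2 : ℝ) ^ (-1 : ℝ) := by
          apply Real.rpow_le_rpow_of_exponent_le (by norm_num)
          have e1 : 2 * (n : ℝ) / L ^ 2 ≤ n / L / 2 := by
            rw [div_div, div_le_div_iff₀ (by positivity) (by positivity)]
            have : 0 ≤ (n : ℝ) * L * (L - 4) := by
              have : 0 ≤ L - 4 := by linarith
              positivity
            nlinarith
          have e2 : L + 2 ≤ n / L / 2 := by
            rw [div_div, le_div_iff₀ (by positivity)]
            linarith
          linarith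
      _ = 1 / 2 := by rw [Real.rpow_neg_one]; norm_num
  have hC : (2 : ℝ) ^ n * (2 * κ) ^ (-((t : ℝ) / 2)) ≤ 1 / 2 * P := by
    rw [Real.mul_rpow (by norm_num) hκ0.le, ← hP]
    have : (2 : ℝ) ^ n * κ ^ (-((t : ℝ) / 2)) ≤ 1 / 2 := by
      rw [hκ, ← Real.rpow_mul (by norm_num), ← Real.rpow_natCast, ← Real.rpow_add (by norm_num)]
      calc _ ≤ (2 : ℝ) ^ (-1 : ℝ) := by
            apply Real.rpow_le_rpow_of_exponent_le (by norm_num)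
            have e0 : 0 ≤ L - 3 * l := by linarith
            have e1 : (1 + 4 * l / L) * (n / L) * (L - 3 * l) ≤ (t : ℝ) / 2 * (L - 3 * l) := by gcongr
            have e2 : (n : ℝ) + 1 ≤ (1 + 4 * l / L) * (n / L) * (L - 3 * l) := by
              have : (1 + 4 * l / L) * (n / L) * (L - 3 * l)
                  = n + n * (l * (L - 12 * l)) / L ^ 2 := by
                field_simp; ring
              rw [this]
              have : 1 ≤ n * (l * (L - 12 * l)) / L ^ 2 := by
                rw [le_div_iff₀ (by positivity)]
                have a0 : L / 2 ≤ L - 12 * l := by linarith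
                have a1 : 1 * (L / 2) ≤ l * (L - 12 * l) := by gcongr
                have a2 : 2 * L ≤ n := by
                  refine le_trans ?_ hnL
                  exact le_mul_of_one_le_right (by positivity) (by linarith)
                have a3 : (2 * L) * (1 * (L / 2)) ≤ n * (l * (L - 12 * l)) := by gcongr
                linarith [show (2 * L) * (1 * (L / 2)) = L ^ 2 by ring]
              linarith
            linarith [show (L - 3 * l) * -((t : ℝ) / 2) = -((t : ℝ) / 2 * (L - 3 * l)) by ring]
        _ = 1 / 2 := by rw [Real.rpow_neg_one]; norm_num
    calc _ = P * ((2 : ℝ) ^ n * κ ^ (-((t : ℝ) / 2))) := by ring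
      _ ≤ P * (1 / 2) := mul_le_mul_of_nonneg_left this hP0.le
      _ = _ := by ring
  have hB' : (S.card : ℝ) * P * P ≤ 1 / 2 * P := mul_le_mul_of_nonneg_right hB hP0.le
  linarith
end

section
/- Let n ∈ ℕ, let z : Fin n → Bool, let σ be a permutation of Fin n, and let f = LO_{z,σ}. If (x,y) is a critical pair for f, then either f(x) = n and f(y) = n, or f(x) > f(y). -/
/-- The LeadingOnes function `LO_{z,σ}(x) = max{m ∈ [0..n] : ∀ j < m, x(σ j) = z(σ j)}`. -/
def leadingOnes {n : ℕ} (z : Fin n → Bool) (σ : Equiv.Perm (Fin n))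
    (x : Fin n → Bool) : ℕ :=
  ((Finset.range (n + 1)).filter fun m =>
    ∀ j : Fin n, (j : ℕ) < m → x (σ j) = z (σ j)).sup id

/-- A pair `(x,y)` is critical for `f` if `f x ≥ f y` and the number of
positions where `x` and `y` agree equals `f y`. -/
def IsCriticalPair {n : ℕ} (f : (Fin n → Bool) → ℕ) (x y : Fin n → Bool) : Prop :=
  f x ≥ f y ∧ (Finset.univ.filter fun i => x i = y i).card = f y

theorem leadingOnes_spec {n : ℕ} (z : Fin n → Bool) (σ : Equiv.Perm (Fin n))
    (x : Fin n → Bool) :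
    leadingOnes z σ x ≤ n ∧ (∀ j : Fin n, (j : ℕ) < leadingOnes z σ x → x (σ j) = z (σ j)) ∧
    (∀ j : Fin n, (j : ℕ) = leadingOnes z σ x → x (σ j) ≠ z (σ j)) := by
  have hne : ((Finset.range (n + 1)).filter fun m =>
      ∀ j : Fin n, (j : ℕ) < m → x (σ j) = z (σ j)).Nonempty := ⟨0, by simp⟩
  obtain ⟨m, hm, hm2⟩ := Finset.exists_mem_eq_sup _ hne id
  have hm3 : leadingOnes z σ x = m := hm2
  have hmem := hm
  rw [Finset.mem_filter, Finset.mem_range] at hm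
  rw [hm3]
  refine ⟨by omega, hm.2, ?_⟩
  intro j hj he
  have h1 : m + 1 ≤ leadingOnes z σ x := by
    unfold leadingOnes
    refine Finset.le_sup (f := id) (b := m + 1) ?_
    rw [Finset.mem_filter, Finset.mem_range]
    refine ⟨by have := j.2; omega, fun k hk => ?_⟩
    rcases Nat.lt_succ_iff_lt_or_eq.mp hk with h | h
    · exact hm.2 k h
    · have : k = j := Fin.ext (by omega)
      rw [this]; exact he
  omega

/-- Lemma 9 of the paper: if `(x,y)` is a critical pair for `f = LO_{z,σ}`,
then either `f x = n = f y` or `f x > f y`. -/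
theorem stmt_10 (n : ℕ) (z : Fin n → Bool) (σ : Equiv.Perm (Fin n))
    (x y : Fin n → Bool) (h : IsCriticalPair (leadingOnes z σ) x y) :
    (leadingOnes z σ x = n ∧ leadingOnes z σ y = n) ∨
      leadingOnes z σ x > leadingOnes z σ y := by
  obtain ⟨hge, hcard⟩ := h
  by_cases hgt : leadingOnes z σ x > leadingOnes z σ y
  · exact Or.inr hgt
  left
  have heq : leadingOnes z σ x = leadingOnes z σ y := by omega
  obtain ⟨hx1, hx2, hx3⟩ := leadingOnes_spec z σ x
  obtain ⟨hy1, hy2, hy3⟩ := leadingOnes_spec z σ y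
  rw [heq] at hx1 hx2 hx3 ⊢
  by_contra hn
  have hlt : leadingOnes z σ y < n := by omega
  have hsub : (Finset.Iic (⟨leadingOnes z σ y, hlt⟩ : Fin n)).map σ.toEmbedding ⊆
      Finset.univ.filter fun i => x i = y i := by
    intro i hi
    obtain ⟨j, hj, rfl⟩ := Finset.mem_map.mp hi
    have hj' : (j : ℕ) ≤ leadingOnes z σ y := Fin.le_def.mp (Finset.mem_Iic.mp hj)
    refine Finset.mem_filter.mpr ⟨Finset.mem_univ _, ?_⟩
    change x (σ j) = y (σ j)
    rcases Nat.lt_or_eq_of_le hj' with h | h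
    · rw [hx2 j h, hy2 j h]
    · have h1 := hx3 j h
      have h2 := hy3 j h
      revert h1 h2
      cases x (σ j) <;> cases y (σ j) <;> cases z (σ j) <;> simp
  have hc := Finset.card_le_card hsub
  rw [Finset.card_map, Fin.card_Iic, hcard] at hc
  simp at hc
end

section
/- Let n ∈ ℕ, let z : Fin n → Bool, let σ be a permutation of Fin n, and let f = LO_{z,σ}. If (x,y) is a critical pair for f with f(x) > f(y) =: v, then the set of positions on which x and y agree is exactly {σ(0), σ(1), …, σ(v−1)}, i.e., {i : x i = y i} = σ '' {j : j < v}; moreover x and z agree and y and z agree on all these positions. -/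
theorem leadingOnes_mem {n : ℕ} (z : Fin n → Bool) (σ : Equiv.Perm (Fin n))
    (x : Fin n → Bool) : leadingOnes z σ x ≤ n ∧
      ∀ j : Fin n, (j : ℕ) < leadingOnes z σ x → x (σ j) = z (σ j) := by
  have hne : ((Finset.range (n + 1)).filter fun m =>
      ∀ j : Fin n, (j : ℕ) < m → x (σ j) = z (σ j)).Nonempty := ⟨0, by simp⟩
  obtain ⟨m, hm, he⟩ := Finset.exists_mem_eq_sup _ hne id
  have he' : leadingOnes z σ x = m := he
  rw [he']
  simp only [Finset.mem_filter, Finset.mem_range] at hm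
  exact ⟨by omega, hm.2⟩

/-- If `(x,y)` is a critical pair for `f = LO_{z,σ}` with `f x > f y = v`,
then `x` and `y` agree exactly on the positions `σ(0), …, σ(v-1)`, and on
these positions both agree with `z`. -/
theorem stmt_11 (n : ℕ) (z : Fin n → Bool) (σ : Equiv.Perm (Fin n))
    (x y : Fin n → Bool) (h : IsCriticalPair (leadingOnes z σ) x y)
    (hgt : leadingOnes z σ x > leadingOnes z σ y) (v : ℕ)
    (hv : v = leadingOnes z σ y) :
    {i : Fin n | x i = y i} = σ '' {j : Fin n | (j : ℕ) < v} ∧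
      ∀ i : Fin n, x i = y i → x i = z i ∧ y i = z i := by
  have hx := leadingOnes_mem z σ x
  have hy := leadingOnes_mem z σ y
  rw [← hv] at hgt hy
  have hc := h.2
  rw [← hv] at hc
  have hsub : (Finset.univ.filter fun j : Fin n => (j : ℕ) < v).map σ.toEmbedding ⊆
      Finset.univ.filter fun i => x i = y i := by
    intro i hi
    simp only [Finset.mem_map, Finset.mem_filter, Finset.mem_univ, true_and] at hi ⊢
    obtain ⟨j, hj, rfl⟩ := hi
    exact (hx.2 j (by omega)).trans (hy.2 j hj).symm
  have hcard : (Finset.univ.filter fun j : Fin n => (j : ℕ) < v).card = v := by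
    rw [Fin.card_filter_val_lt]
    exact min_eq_right hy.1
  have heq := Finset.eq_of_subset_of_card_le hsub (by rw [Finset.card_map, hc, hcard])
  have key : ∀ i, x i = y i ↔ ∃ j : Fin n, (j : ℕ) < v ∧ σ j = i := by
    intro i
    have := Finset.ext_iff.mp heq i
    simp only [Finset.mem_map, Finset.mem_filter, Finset.mem_univ, true_and] at this
    exact this.symm
  refine ⟨?_, ?_⟩
  · ext i
    exact key i
  · intro i hi
    obtain ⟨j, hj, rfl⟩ := (key i).1 hi
    exact ⟨hx.2 j (by omega), hy.2 j hj⟩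
end

section
/- Let n ∈ ℕ, let z : Fin n → Bool, let σ be a permutation of Fin n, and let f = LO_{z,σ}. Let y : Fin n → Bool with v := f(y) < n. Then for every position i ∈ Fin n, flipping bit i of y strictly increases the f-value, i.e., f(flip_i(y)) > f(y), if and only if i = σ(v). In other words, σ(v) is the unique critical bit-position of y. -/
theorem lt_leadingOnes_iff {n : ℕ} (z : Fin n → Bool) (σ : Equiv.Perm (Fin n))
    (x : Fin n → Bool) (m : ℕ) :
    m < leadingOnes z σ x ↔ m < n ∧ ∀ j : Fin n, (j : ℕ) ≤ m → x (σ j) = z (σ j) := by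
  unfold leadingOnes
  rw [Finset.lt_sup_iff]
  simp only [Finset.mem_filter, Finset.mem_range, id]
  constructor
  · rintro ⟨b, ⟨hb, h⟩, hm⟩
    exact ⟨by omega, fun j hj => h j (by omega)⟩
  · rintro ⟨hm, h⟩
    exact ⟨m + 1, ⟨by omega, fun j hj => h j (by omega)⟩, by omega⟩

/-- `σ(v)` with `v = LO_{z,σ}(y) < n` is the unique critical bit-position of
`y`: flipping bit `i` of `y` strictly increases the LeadingOnes value iff
`i = σ(v)`. -/
theorem stmt_12 (n : ℕ) (z : Fin n → Bool) (σ : Equiv.Perm (Fin n))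
    (y : Fin n → Bool) (v : ℕ) (hv : v = leadingOnes z σ y) (hvn : v < n)
    (i : Fin n) :
    leadingOnes z σ (Function.update y i (!(y i))) > leadingOnes z σ y ↔
      i = σ ⟨v, hvn⟩ := by
  rw [← hv]
  have hlt : ∀ j : Fin n, (j : ℕ) < v → y (σ j) = z (σ j) := fun j hj =>
    ((lt_leadingOnes_iff z σ y j).1 (hv ▸ hj)).2 j le_rfl
  have hne : y (σ ⟨v, hvn⟩) ≠ z (σ ⟨v, hvn⟩) := by
    intro he
    have : v < leadingOnes z σ y := by
      rw [lt_leadingOnes_iff]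
      refine ⟨hvn, fun j hj => ?_⟩
      rcases Nat.lt_or_eq_of_le hj with h | h
      · exact hlt j h
      · have : j = ⟨v, hvn⟩ := Fin.ext h
        rw [this]; exact he
    omega
  rw [gt_iff_lt, lt_leadingOnes_iff]
  constructor
  · rintro ⟨_, h⟩
    by_contra hi
    have := h ⟨v, hvn⟩ le_rfl
    rw [Function.update_of_ne (Ne.symm hi)] at this
    exact hne this
  · rintro rfl
    refine ⟨hvn, fun j hj => ?_⟩
    by_cases h : j = ⟨v, hvn⟩
    · subst h
      rw [Function.update_self]
      revert hne
      cases y (σ ⟨v, hvn⟩) <;> cases z (σ ⟨v, hvn⟩) <;> simp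
    · rw [Function.update_of_ne (fun e => h (σ.injective e))]
      exact hlt j (lt_of_le_of_ne hj fun e => h (Fin.ext e))
end
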